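/- For the uniform-mesh mixed MUSCL–Trapezoidal scheme with forward-difference slopes, the corrected grid function w̄_i^n = s̄_i^n + γ_i^n with γ_0^n = -(λ²/2)h² s_xx(t^n,x_0) on the implicit cell 0 and γ_i^n = 0 elsewhere has a uniformly third-order one-step error: L(w̄^n, w̄^{n+1})_i = O(h³) for all cells i. -/

import Mathlib

open Filter Asymptotics Topology intervalIntegral

/-- Exact cell average of `s(t,·)` over the cell of width `h` centered at `x`. -/
noncomputable def cellAvg (s : ℝ → ℝ → ℝ) (h t x : ℝ) : ℝ :=
  (1/h) * ∫ y in (x - h/2)..(x + h/2), s t y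

/-- One-step error functional `L(Wn,Wp)_i = Φ(Wn,Wp)_i - Wp_i` of the mixed
MUSCL–Trapezoidal scheme on a uniform mesh (forward-difference slopes, trapezoidal
fluxes at edges `-1/2` and `1/2`, MUSCL fluxes elsewhere, `Δt = λh/u`), applied to
arbitrary grid functions `Wn` (at `t^n`) and `Wp` (at `t^{n+1}`). -/
noncomputable def mixedSchemeL (u lam h : ℝ) (Wn Wp : ℤ → ℝ) (i : ℤ) : ℝ :=
  let σn := fun (j : ℤ) => (Wn (j+1) - Wn j) / h
  let σp := fun (j : ℤ) => (Wp (j+1) - Wp j) / h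
  let FM := fun (j : ℤ) => u * (Wn j + (1 - lam) * σn j * (h/2))
  let FT := fun (j : ℤ) =>
    (u/2) * (Wn j + σn j * (h/2) + Wp j + σp j * (h/2))
  let flux := fun (j : ℤ) => if j = -1 ∨ j = 0 then FT j else FM j
  Wn i - ((lam * h / u) / h) * (flux i - flux (i-1)) - Wp i

/-- The corrected grid function `w̄_i = s̄_i + γ_i` at time `t`, with
`γ_0 = -(λ²/2) h² s_xx(t, x_0)` on the implicit cell `0` and `γ_i = 0` elsewhere. -/
noncomputable def correctedGrid (s : ℝ → ℝ → ℝ) (lam x0 h t : ℝ) (i : ℤ) : ℝ :=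
  cellAvg s h t (x0 + (i : ℝ) * h)
    + (if i = 0 then -(lam^2/2) * h^2 * iteratedDeriv 2 (s t) x0 else 0)


lemma mv_aux (φ ψ : ℝ → ℝ) (h0 : φ 0 = 0) (hd : ∀ x, HasDerivAt φ (ψ x) x) (K : ℝ) (n : ℕ)
    (hK : 0 ≤ K) (hb : ∀ d, |ψ d| ≤ K * |d| ^ n) (d : ℝ) : |φ d| ≤ K * |d| ^ (n+1) := by
  have := (convex_uIcc (0:ℝ) d).norm_image_sub_le_of_norm_hasDerivWithin_le
    (f := φ) (f' := ψ) (C := K * |d| ^ n) (x := 0) (y := d)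
    (fun x _ => (hd x).hasDerivWithinAt) (by
      intro x hx
      have hx' : |x| ≤ |d| := by
        have := Set.abs_sub_left_of_mem_uIcc hx
        simpa using this
      rw [Real.norm_eq_abs]
      refine (hb x).trans ?_
      gcongr) Set.left_mem_uIcc Set.right_mem_uIcc
  simp only [h0, sub_zero, Real.norm_eq_abs] at this
  rw [pow_succ, ← mul_assoc]
  exact this

lemma taylor_aux (G F0 F1 F2 F3 : ℝ → ℝ) (M : ℝ)
    (h0 : ∀ x, HasDerivAt G (F0 x) x) (h1 : ∀ x, HasDerivAt F0 (F1 x) x)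
    (h2 : ∀ x, HasDerivAt F1 (F2 x) x) (h3 : ∀ x, HasDerivAt F2 (F3 x) x)
    (hM : ∀ x, |F3 x| ≤ M) (x d : ℝ) :
    |G (x+d) - (G x + F0 x * d + F1 x * d^2/2 + F2 x * d^3/6)| ≤ M * |d|^4 := by
  have hM0 : 0 ≤ M := (abs_nonneg _).trans (hM 0)
  have sh : ∀ (A B : ℝ → ℝ), (∀ x, HasDerivAt A (B x) x) →
      ∀ d, HasDerivAt (fun d => A (x+d)) (B (x+d)) d := by
    intro A B hAB d
    exact (hAB (x+d)).comp_const_add x d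
  have e3 : ∀ d, |F2 (x+d) - F2 x| ≤ M * |d|^1 := by
    refine mv_aux (fun d => F2 (x+d) - F2 x) (fun d => F3 (x+d)) (by simp)
      (fun d => (sh _ _ h3 d).sub_const _) M 0 hM0 ?_
    intro d; simpa using hM (x+d)
  have e2 : ∀ d, |F1 (x+d) - (F1 x + F2 x * d)| ≤ M * |d|^2 := by
    refine mv_aux (fun d => F1 (x+d) - (F1 x + F2 x * d)) (fun d => F2 (x+d) - F2 x) (by simp)
      (fun d => ?_) M 1 hM0 e3
    have := (sh _ _ h2 d).sub (((hasDerivAt_id d).const_mul (F2 x)).const_add (F1 x))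
    refine this.congr_deriv ?_
    simp
  have e1 : ∀ d, |F0 (x+d) - (F0 x + F1 x * d + F2 x * d^2/2)| ≤ M * |d|^3 := by
    refine mv_aux (fun d => F0 (x+d) - (F0 x + F1 x * d + F2 x * d^2/2))
      (fun d => F1 (x+d) - (F1 x + F2 x * d)) (by simp) (fun d => ?_) M 2 hM0 e2
    have := (sh _ _ h1 d).sub ((((hasDerivAt_id d).const_mul (F1 x)).const_add (F0 x)).add
      (((hasDerivAt_pow 2 d).const_mul (F2 x)).div_const 2))
    refine this.congr_deriv ?_
    simp
    ring
  refine mv_aux (fun d => G (x+d) - (G x + F0 x * d + F1 x * d^2/2 + F2 x * d^3/6))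
      (fun d => F0 (x+d) - (F0 x + F1 x * d + F2 x * d^2/2)) (by simp) (fun d => ?_) M 3 hM0 e1 d
  have := (sh _ _ h0 d).sub (((((hasDerivAt_id d).const_mul (F0 x)).const_add (G x)).add
      (((hasDerivAt_pow 2 d).const_mul (F1 x)).div_const 2)).add
      (((hasDerivAt_pow 3 d).const_mul (F2 x)).div_const 6))
  refine this.congr_deriv ?_
  simp
  ring

lemma transport_aux (s : ℝ → ℝ → ℝ) (u : ℝ)
    (hs : ContDiff ℝ (⊤ : ℕ∞) (Function.uncurry s))
    (hpde : ∀ t x : ℝ, deriv (fun τ => s τ x) t + u * deriv (fun y => s t y) x = 0)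
    (t x τ : ℝ) : s (t + τ) x = s t (x - u * τ) := by
  have hdiff : Differentiable ℝ (Function.uncurry s) := hs.differentiable (by simp)
  have key : ∀ r, HasDerivAt (fun r => Function.uncurry s (t + r, (x - u*τ) + u * r)) 0 r := by
    intro r
    set y := (x - u*τ) + u * r with hy
    have hF := (hdiff (t + r, y)).hasFDerivAt
    set D := fderiv ℝ (Function.uncurry s) (t + r, y)
    have ht : HasDerivAt (fun a => s a y) (D (1, 0)) (t+r) :=
      hF.comp_hasDerivAt_of_eq (t+r) ((hasDerivAt_id (t+r)).prodMk (hasDerivAt_const (t+r) y)) rfl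
    have hx : HasDerivAt (fun b => s (t+r) b) (D (0, 1)) y :=
      hF.comp_hasDerivAt y ((hasDerivAt_const y (t+r)).prodMk (hasDerivAt_id y))
    have hp := hpde (t+r) y
    rw [ht.deriv, hx.deriv] at hp
    have hl : HasDerivAt (fun r => (t + r, (x - u*τ) + u * r)) ((1:ℝ), u) r := by
      refine ((hasDerivAt_id r).const_add t).prodMk ?_
      simpa using ((hasDerivAt_id r).const_mul u).const_add (x - u*τ)
    have := hF.comp_hasDerivAt r hl
    have e : D (1, u) = 0 := by
      have : ((1:ℝ), u) = (1, 0) + u • ((0:ℝ), (1:ℝ)) := by simp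
      rw [this, map_add, map_smul, smul_eq_mul, hp]
    rw [e] at this
    exact this
  have hc := is_const_of_deriv_eq_zero (fun r => (key r).differentiableAt)
    (fun r => (key r).deriv) τ 0
  simpa using hc

lemma abs_mul_pos_aux (y h : ℝ) (hh : 0 < h) : |y| * h = |y * h| := by
  rw [abs_mul, abs_of_pos hh]

lemma mixed_form (u lam h : ℝ) (hu : 0 < u) (hh : 0 < h) (Wn Wp : ℤ → ℝ) (i : ℤ) :
    mixedSchemeL u lam h Wn Wp i = Wn i - lam * (
      (if i = -1 ∨ i = 0 then (Wn i + Wn (i+1) + Wp i + Wp (i+1))/4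
        else Wn i + (1-lam) * (Wn (i+1) - Wn i)/2)
      - (if i-1 = -1 ∨ i-1 = 0 then (Wn (i-1) + Wn i + Wp (i-1) + Wp i)/4
        else Wn (i-1) + (1-lam) * (Wn i - Wn (i-1))/2)) - Wp i := by
  simp only [mixedSchemeL, sub_add_cancel]
  split_ifs <;> field_simp <;> ring

lemma coef_aux (c e K : ℝ) (hc : |c| ≤ 1) (he : |e| ≤ K) : |c * e| ≤ K := by
  rw [abs_mul]
  nlinarith [abs_nonneg c, abs_nonneg e]

/-- For the uniform-mesh mixed MUSCL–Trapezoidal scheme with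
forward-difference slopes, the corrected grid function
`w̄_i^n = s̄_i^n + γ_i^n`, `γ_0^n = -(λ²/2)h² s_xx(t^n,x_0)` (zero elsewhere),
has a *uniformly* third-order one-step error: `L(w̄^n, w̄^{n+1})_i = O(h³)`
for all cells `i`, uniformly in `i`. -/
theorem corrected_grid_one_step_third_order
    (s : ℝ → ℝ → ℝ) (u lam tn x0 : ℝ) (hu : 0 < u)
    (hlam : lam ∈ Set.Ioc (0:ℝ) 1)
    (hs : ContDiff ℝ (⊤ : ℕ∞) (Function.uncurry s))
    (hpde : ∀ t x : ℝ, deriv (fun τ => s τ x) t + u * deriv (fun y => s t y) x = 0)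
    (hbd : ∀ k : ℕ, ∃ M : ℝ, ∀ t x : ℝ, |iteratedDeriv k (s t) x| ≤ M) :
    ∃ C δ : ℝ, 0 < δ ∧ ∀ h : ℝ, 0 < h → h < δ → ∀ i : ℤ,
      |mixedSchemeL u lam h
          (correctedGrid s lam x0 h tn)
          (correctedGrid s lam x0 h (tn + lam * h / u)) i| ≤ C * h^3 := by
  obtain ⟨hl0, hl1⟩ := hlam
  obtain ⟨M, hM'⟩ := hbd 3
  have hM : ∀ x, |iteratedDeriv 3 (s tn) x| ≤ M := hM' tn
  have hM0 : 0 ≤ M := (abs_nonneg _).trans (hM 0)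
  set f := s tn with hf
  have hfs : ContDiff ℝ (⊤ : ℕ∞) f := by
    have : f = Function.uncurry s ∘ (fun x => (tn, x)) := rfl
    rw [this]
    exact hs.comp (contDiff_const.prodMk contDiff_id)
  have hder : ∀ k x, HasDerivAt (iteratedDeriv k f) (iteratedDeriv (k+1) f x) x := by
    intro k x
    rw [iteratedDeriv_succ]
    refine DifferentiableAt.hasDerivAt ?_
    exact (hfs.differentiable_iteratedDeriv k (by exact_mod_cast WithTop.coe_lt_top k)) x
  have hd0 : ∀ x, HasDerivAt f (iteratedDeriv 1 f x) x := by
    simpa using hder 0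
  have hcont : Continuous f := hfs.continuous
  set G : ℝ → ℝ := fun x => ∫ y in (0:ℝ)..x, f y with hG
  have hGd : ∀ x, HasDerivAt G (f x) x := fun x => hcont.integral_hasStrictDerivAt 0 x |>.hasDerivAt
  have hT := taylor_aux G f _ _ _ M hGd hd0 (hder 1) (hder 2) hM
  have hL2 : ∀ x d, |iteratedDeriv 2 f (x+d) - iteratedDeriv 2 f x| ≤ M * |d| := by
    intro x d
    have := mv_aux (fun d => iteratedDeriv 2 f (x+d) - iteratedDeriv 2 f x)
      (fun d => iteratedDeriv 3 f (x+d)) (by simp)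
      (fun d => ((hder 2 (x+d)).comp_const_add x d).sub_const _) M 0 hM0
      (fun d => by simpa using hM (x+d)) d
    simpa using this
  have havg : ∀ h x, (1/h) * (∫ y in (x - h/2)..(x + h/2), f y) = (G (x+h/2) - G (x-h/2))/h := by
    intro h x
    rw [hG]
    simp only
    rw [intervalIntegral.integral_interval_sub_left (hcont.intervalIntegrable _ _) (hcont.intervalIntegrable _ _)]
    ring
  refine ⟨10000 * M, 1, one_pos, ?_⟩
  intro h hh _ i
  have htr : s (tn + lam * h / u) = fun x => f (x - lam * h) := by
    funext x
    rw [transport_aux s u hs hpde tn x (lam*h/u)]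
    congr 2
    field_simp
  set A : ℝ → ℝ := fun x => (G (x+h/2) - G (x-h/2))/h with hA
  have hWn : ∀ j : ℤ, correctedGrid s lam x0 h tn j =
      A (x0 + j*h) + (if j = 0 then -(lam^2/2) * h^2 * iteratedDeriv 2 f x0 else 0) := by
    intro j
    rw [correctedGrid, cellAvg, ← hf, havg]
  have hWp : ∀ j : ℤ, correctedGrid s lam x0 h (tn + lam * h / u) j =
      A (x0 + j*h - lam*h) +
        (if j = 0 then -(lam^2/2) * h^2 * iteratedDeriv 2 f (x0 - lam*h) else 0) := by
    intro j
    rw [correctedGrid, cellAvg, htr, iteratedDeriv_comp_sub_const,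
      intervalIntegral.integral_comp_sub_right (fun y => f y)]
    have := havg h (x0 + j*h - lam*h)
    rw [hA]
    simp only
    rw [← this]
    congr 3 <;> ring
  -- expansion of averages around the center `x`
  have hexp : ∀ x θ, |θ| ≤ 3 → |A (x + θ*h) - (f x + iteratedDeriv 1 f x * (θ*h)
      + iteratedDeriv 2 f x * ((θ^2/2+1/24)*h^2))| ≤ 400 * M * h^3 := by
    intro x θ hθ
    have hθ' := abs_le.1 hθ
    have b : ∀ η : ℝ, |η| ≤ 7/2 → |G (x+η*h) - (G x + f x * (η*h) + iteratedDeriv 1 f x * (η*h)^2/2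
        + iteratedDeriv 2 f x * (η*h)^3/6)| ≤ 200 * M * h^4 := by
      intro η hη
      refine (hT x (η*h)).trans ?_
      rw [abs_mul, abs_of_pos hh, mul_pow]
      have h4 : |η|^4 ≤ (7/2:ℝ)^4 := by gcongr
      have : |η|^4 ≤ 200 := h4.trans (by norm_num)
      have := mul_le_mul_of_nonneg_left this (mul_nonneg hM0 (pow_pos hh 4).le)
      linarith
    have b1 := b (θ+1/2) (abs_le.2 ⟨by linarith, by linarith⟩)
    have b2 := b (θ-1/2) (abs_le.2 ⟨by linarith, by linarith⟩)
    rw [hA]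
    simp only
    rw [show x + θ*h + h/2 = x + (θ+1/2)*h by ring, show x + θ*h - h/2 = x + (θ-1/2)*h by ring]
    have b3 := (abs_sub _ _).trans (add_le_add b1 b2)
    rw [← mul_le_mul_iff_left₀ hh]
    refine le_trans (le_of_eq (abs_mul_pos_aux _ h hh)) ?_
    have e : 400 * M * h^3 * h = 200 * M * h^4 + 200 * M * h^4 := by ring
    rw [e]
    refine le_trans (le_of_eq ?_) b3
    congr 1
    rw [sub_mul, div_mul_cancel₀ _ hh.ne']
    ring
  set x := x0 + i*h with hx
  set a := f x
  set b := iteratedDeriv 1 f x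
  set c := iteratedDeriv 2 f x with hc
  -- errors
  set E : ℝ → ℝ := fun θ => A (x + θ*h) - (a + b * (θ*h) + c * ((θ^2/2+1/24)*h^2)) with hE
  have hEb : ∀ θ, |θ| ≤ 3 → |E θ| ≤ 400 * M * h^3 := fun θ => hexp x θ
  have hAE : ∀ θ, A (x + θ*h) = a + b * (θ*h) + c * ((θ^2/2+1/24)*h^2) + E θ := by
    intro θ; rw [hE]; ring
  have hn : ∀ k : ℤ, A (x0 + ((i + k : ℤ):ℝ)*h) =
      a + b * (k*h) + c * (((k:ℝ)^2/2+1/24)*h^2) + E k := by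
    intro k; rw [← hAE, hx]; congr 1; push_cast; ring
  have hp : ∀ k : ℤ, A (x0 + ((i + k : ℤ):ℝ)*h - lam*h) =
      a + b * ((k-lam)*h) + c * (((k-lam:ℝ)^2/2+1/24)*h^2) + E (k-lam) := by
    intro k; rw [← hAE, hx]; congr 1; push_cast; ring
  have n0 := hn 0
  have n1 := hn 1
  have nm := hn (-1)
  have p0 := hp 0
  have p1 := hp 1
  have pm := hp (-1)
  have En0 := hEb 0 (by norm_num)
  have En1 := hEb 1 (by norm_num)
  have Enm := hEb (-1) (by norm_num)
  have Ep0 := hEb (0-lam) (abs_le.2 ⟨by linarith, by linarith⟩)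
  have Ep1 := hEb (1-lam) (abs_le.2 ⟨by linarith, by linarith⟩)
  have Epm := hEb (-1-lam) (abs_le.2 ⟨by linarith, by linarith⟩)
  set K := 400 * M * h^3 with hK
  have hK0 : 0 ≤ K := by positivity
  rw [mixed_form u lam h hu hh]
  set Wn := correctedGrid s lam x0 h tn
  set Wp := correctedGrid s lam x0 h (tn + lam * h / u)
  set D := iteratedDeriv 2 f x0 with hD
  set D' := iteratedDeriv 2 f (x0 - lam*h) with hD'
  have hDb : |(i:ℝ)| ≤ 1 → |h^2 * (D - c)| ≤ K := by
    intro hi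
    have h1 := hL2 x (-(i*h))
    rw [show x + -(i*h) = x0 by rw [hx]; ring, abs_neg, abs_mul, abs_of_pos hh] at h1
    rw [abs_mul, abs_of_pos (pow_pos hh 2)]
    have h2 : |D - c| ≤ M * h := h1.trans (by
      have := mul_le_mul_of_nonneg_left hi (mul_nonneg hM0 hh.le)
      linarith)
    have h3 := mul_le_mul_of_nonneg_left h2 (pow_pos hh 2).le
    have h4 : 0 ≤ M * h^3 := by positivity
    rw [hK]
    linarith
  have hDb' : |(i:ℝ)| ≤ 1 → |h^2 * (D' - c)| ≤ K := by
    intro hi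
    have h1 := hL2 x ((-i-lam)*h)
    rw [show x + (-i-lam)*h = x0 - lam*h by rw [hx]; ring, abs_mul, abs_of_pos hh] at h1
    rw [abs_mul, abs_of_pos (pow_pos hh 2)]
    have h2 : |D' - c| ≤ M * (2*h) := h1.trans (by
      have hi' := abs_le.1 hi
      have : |(-i-lam:ℝ)| ≤ 2 := abs_le.2 ⟨by linarith, by linarith⟩
      gcongr)
    have h3 := mul_le_mul_of_nonneg_left h2 (pow_pos hh 2).le
    have h4 : 0 ≤ M * h^3 := by positivity
    rw [hK]
    linarith
  have q0 : Wn i = _ := hWn i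
  have q1 : Wn (i+1) = _ := hWn (i+1)
  have qm : Wn (i-1) = _ := hWn (i-1)
  have r0 : Wp i = _ := hWp i
  have r1 : Wp (i+1) = _ := hWp (i+1)
  have rm : Wp (i-1) = _ := hWp (i-1)
  rw [show i + (-1) = i - 1 by ring] at nm pm
  rw [add_zero] at n0 p0
  rw [n0] at q0
  rw [n1] at q1
  rw [nm] at qm
  rw [p0] at r0
  rw [p1] at r1
  rw [pm] at rm
  simp only [Int.cast_zero, Int.cast_one, Int.cast_neg] at q0 q1 qm r0 r1 rm
  have hfin : 10000 * M * h^3 = 25 * K := by rw [hK]; ring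
  rw [hfin, q0, q1, qm, r0, r1, rm]
  clear q0 q1 qm r0 r1 rm n0 n1 nm p0 p1 pm hn hp hAE hexp hfin hWn hWp
  generalize E 0 = e0 at *
  generalize E 1 = e1 at *
  generalize E (-1) = em at *
  generalize E (0-lam) = g0 at *
  generalize E (1-lam) = g1 at *
  generalize E (-1-lam) = gm at *
  clear_value K D D' c b a
  clear hEb hT hL2 havg htr
  have c1 : |lam| ≤ 1 := abs_le.2 ⟨by linarith, by linarith⟩
  have c2 : |1 - lam| ≤ 1 := abs_le.2 ⟨by linarith, by linarith⟩
  have c3 : ∀ e, |e| ≤ K → |lam * e| ≤ K := fun e he => coef_aux _ _ _ c1 he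
  have c4 : ∀ e, |e| ≤ K → |lam * ((1-lam) * e)| ≤ K :=
    fun e he => c3 _ (coef_aux _ _ _ c2 he)
  have t0 := abs_le.1 (c3 _ En0)
  have t1 := abs_le.1 (c3 _ En1)
  have tm := abs_le.1 (c3 _ Enm)
  have v0 := abs_le.1 (c3 _ Ep0)
  have v1 := abs_le.1 (c3 _ Ep1)
  have vm := abs_le.1 (c3 _ Epm)
  have w0 := abs_le.1 (c4 _ En0)
  have w1 := abs_le.1 (c4 _ En1)
  have wm := abs_le.1 (c4 _ Enm)
  have y0 := abs_le.1 En0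
  have z0 := abs_le.1 Ep0
  by_cases hi : i = -1 ∨ i = 0 ∨ i = 1
  · have hi1 : |(i:ℝ)| ≤ 1 := by rcases hi with rfl | rfl | rfl <;> norm_num
    have d := hDb hi1
    have d' := hDb' hi1
    have k1 := abs_le.1 (c3 _ (c3 _ d))
    have k1' := abs_le.1 (c3 _ (c3 _ d'))
    have k2 := abs_le.1 (c3 _ (c3 _ (c3 _ d)))
    have k2' := abs_le.1 (c3 _ (c3 _ (c3 _ d')))
    rw [abs_le]
    rcases hi with hi | hi | hi
    · rw [if_pos (Or.inl hi), if_neg (by omega : ¬ (i - 1 = -1 ∨ i - 1 = 0)),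
        if_neg (by omega : ¬ i = 0), if_pos (by omega : i + 1 = 0),
        if_neg (by omega : ¬ i - 1 = 0), if_neg (by omega : ¬ i = 0),
        if_pos (by omega : i + 1 = 0)]
      constructor <;> linarith
    · rw [if_pos (Or.inr hi), if_pos (by omega : (i - 1 = -1 ∨ i - 1 = 0)),
        if_pos (by omega : i = 0), if_neg (by omega : ¬ i + 1 = 0),
        if_neg (by omega : ¬ i - 1 = 0), if_pos (by omega : i = 0),
        if_neg (by omega : ¬ i + 1 = 0), if_neg (by omega : ¬ i - 1 = 0)]
      constructor <;> linarith
    · rw [if_neg (by omega : ¬ (i = -1 ∨ i = 0)), if_pos (by omega : (i - 1 = -1 ∨ i - 1 = 0)),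
        if_neg (by omega : ¬ i = 0), if_neg (by omega : ¬ i + 1 = 0),
        if_pos (by omega : i - 1 = 0), if_pos (by omega : i - 1 = 0), if_neg (by omega : ¬ i = 0)]
      constructor <;> linarith
  · rw [abs_le]
    rw [if_neg (by omega : ¬ (i = -1 ∨ i = 0)), if_neg (by omega : ¬ (i - 1 = -1 ∨ i - 1 = 0)),
      if_neg (by omega : ¬ i = 0)]
    by_cases h1 : i + 1 = 0
    · omega
    · rw [if_neg h1, if_neg (by omega : ¬ i - 1 = 0), if_neg (by omega : ¬ i = 0)]
      constructor <;> linarith
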